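/- arXiv:1205.6256 — 2 statements merged into one kernel-verified Lean document; each statement's English description precedes it below -/
import Mathlib

section
/- Every Abelian Sandpile Model reaching a unique fixed point is equivalent to a simple Abelian Sandpile Model: for every ASM CFG(G,O) reaching a unique fixed point there exists a simple ASM CFG(G',O') reaching a unique fixed point whose configuration space is order-isomorphic to that of CFG(G,O). -/
open Classical

section CFGdefs

variable {V : Type*}

/-- Out-degree of a vertex in a directed multigraph with edge multiplicities `E`. -/
noncomputable def outDeg (E : V → V → ℕ) (v : V) : ℕ := ∑ᶠ u, E v u

/-- A vertex is a sink if all its outgoing edges are loops. -/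
def IsSink (E : V → V → ℕ) (v : V) : Prop := outDeg E v = E v v

/-- A vertex is firable in configuration `c`. -/
def Firable (E : V → V → ℕ) (c : V → ℕ) (v : V) : Prop :=
  ¬ IsSink E v ∧ outDeg E v ≤ c v

/-- The result of firing vertex `v` in configuration `c`. -/
noncomputable def fire (E : V → V → ℕ) (c : V → ℕ) (v : V) : V → ℕ :=
  fun u => if u = v then c v - outDeg E v + E v v else c u + E v u

/-- The configuration obtained by firing a list of vertices in order. -/
noncomputable def fireList (E : V → V → ℕ) : (V → ℕ) → List V → (V → ℕ)
  | c, [] => c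
  | c, v :: l => fireList E (fire E c v) l

/-- A list of vertices is a valid firing sequence from `c`. -/
def ValidSeq (E : V → V → ℕ) : (V → ℕ) → List V → Prop
  | _, [] => True
  | c, v :: l => Firable E c v ∧ ValidSeq E (fire E c v) l

/-- `c'` is reachable from `c` by a finite sequence of firings. -/
def Reaches (E : V → V → ℕ) (c c' : V → ℕ) : Prop :=
  ∃ l : List V, ValidSeq E c l ∧ fireList E c l = c'

/-- A configuration with no firable vertex. -/
def FixedPt (E : V → V → ℕ) (c : V → ℕ) : Prop := ∀ v, ¬ Firable E c v

/-- The chip firing game `CFG(G,O)` reaches a unique fixed point. -/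
def ReachesUFP (E : V → V → ℕ) (O : V → ℕ) : Prop :=
  ∃ fp : V → ℕ, Reaches E O fp ∧ FixedPt E fp ∧ ∀ c, Reaches E O c → Reaches E c fp

/-- The game is simple: in every firing sequence from `O` to the fixed point,
each vertex fires at most once. -/
def SimpleCFG (E : V → V → ℕ) (O : V → ℕ) : Prop :=
  ∀ l : List V, ValidSeq E O l → FixedPt E (fireList E O l) → l.Nodup

/-- Single firing step from `c` to `c'` by firing vertex `v`. -/
def FireStep (E : V → V → ℕ) (c : V → ℕ) (v : V) (c' : V → ℕ) : Prop :=
  Firable E c v ∧ fire E c v = c'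

/-- The partial order `L` is order-isomorphic to the configuration space of
`CFG(G,O)` ordered by reachability. -/
def Generates (E : V → V → ℕ) (O : V → ℕ) (L : Type*) [PartialOrder L] : Prop :=
  ∃ f : L ≃ {c : V → ℕ // Reaches E O c},
    ∀ a b : L, a ≤ b ↔ Reaches E (f a).val (f b).val

/-- The support graph is connected (as an undirected graph). -/
def ConnectedG (E : V → V → ℕ) : Prop :=
  ∀ u v : V, Relation.ReflTransGen (fun a b => 0 < E a b ∨ 0 < E b a) u v

/-- The support graph together with its initial data is an Abelian Sandpile Model. -/
def IsASM (E : V → V → ℕ) : Prop :=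
  ConnectedG E ∧ ∃ s : V, IsSink E s ∧ (∀ v, IsSink E v → v = s) ∧
    ∀ v₁ v₂ : V, v₁ ≠ v₂ → v₁ ≠ s → v₂ ≠ s → E v₁ v₂ = E v₂ v₁

/-- The directed multigraph has no directed cycle. -/
def AcyclicG (E : V → V → ℕ) : Prop :=
  ∀ v : V, ¬ Relation.TransGen (fun a b => 0 < E a b) v v

end CFGdefs

/-- `L` is generated by some chip firing game reaching a unique fixed point. -/
def MemLCFG (L : Type*) [PartialOrder L] : Prop :=
  ∃ (V : Type) (_ : Finite V) (E : V → V → ℕ) (O : V → ℕ),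
    ReachesUFP E O ∧ Generates E O L

/-- `L` is generated by some Abelian Sandpile Model reaching a unique fixed point. -/
def MemLASM (L : Type*) [PartialOrder L] : Prop :=
  ∃ (V : Type) (_ : Finite V) (E : V → V → ℕ) (O : V → ℕ),
    IsASM E ∧ ReachesUFP E O ∧ Generates E O L

section Latticedefs

variable {L : Type*} [Lattice L]

/-- `m` is meet-irreducible: it has exactly one upper cover. -/
def MeetIrred (m : L) : Prop := ∃! y, m ⋖ y

/-- `j` is join-irreducible: it has exactly one lower cover. -/
def JoinIrred (j : L) : Prop := ∃! y, y ⋖ j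

/-- The set `M_x \ M_y` of meet-irreducibles above `x` but not above `y`. -/
def MsetDiff (x y : L) : Set L := {m | MeetIrred m ∧ x ≤ m ∧ ¬ y ≤ m}

/-- The set `M \ M_a` of meet-irreducibles not above `a`. -/
def MnotAbove (a : L) : Set L := {m | MeetIrred m ∧ ¬ a ≤ m}

/-- `x⁺`: the join of all upper covers of `x`. -/
noncomputable def uplus [Fintype L] [OrderBot L] (x : L) : L :=
  Finset.univ.sup (fun y => if x ⋖ y then y else ⊥)

/-- `L` is upper locally distributive: for every `x ≠ ⊤` the interval `[x, x⁺]`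
is isomorphic to a Boolean lattice (a hypercube). -/
def IsULD (L : Type*) [Lattice L] [Fintype L] [BoundedOrder L] : Prop :=
  ∀ x : L, x ≠ ⊤ → ∃ n : ℕ, Nonempty (↥(Set.Icc x (uplus x)) ≃o Set (Fin n))

/-- `𝔘_m`: the minimal elements of `{x : ∃ y, x ⋖ y and 𝔪(x,y) = m}`. -/
def Uset (m : L) : Set L :=
  {x | Minimal (fun z => ∃ y, z ⋖ y ∧ MsetDiff z y = {m}) x}

/-- `𝔏_m`: the maximal elements of `{x : a ≰ x for every a ∈ 𝔘_m}`. -/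
def Lset (m : L) : Set L :=
  {x | Maximal (fun z => ∀ a ∈ Uset m, ¬ a ≤ z) x}

/-- `(w, e)` is a (non-negative integer) solution of the system `E(m)`. -/
def SolvesE [OrderBot L] (m : L) (w : ℕ) (e : L → ℕ) : Prop :=
  (Uset m = {(⊥ : L)} → 1 ≤ w) ∧
  (Uset m ≠ {(⊥ : L)} →
    (∀ a ∈ Lset m, (∑ᶠ x ∈ MnotAbove a, e x) < w) ∧
    (∀ a ∈ Uset m, w ≤ ∑ᶠ x ∈ MnotAbove a, e x))

/-- The system `E(m)` has a non-negative integer solution. -/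
def HasSolE [OrderBot L] (m : L) : Prop := ∃ w e, SolvesE m w e

/-- The variable `e_{x,m}` occurs in the system `𝔈(m)`. -/
def VarOccurs [OrderBot L] (x m : L) : Prop :=
  MeetIrred m ∧ Uset m ≠ {(⊥ : L)} ∧ ∃ a ∈ Uset m ∪ Lset m, x ∈ MnotAbove a

/-- `(W, Ee)` is a non-negative integer solution of the system `Ω`. -/
def SolvesOmega [OrderBot L] (W : L → ℕ) (Ee : L → L → ℕ) : Prop :=
  (∀ m : L, MeetIrred m → SolvesE m (W m) (fun x => Ee x m)) ∧
  (∀ m₁ m₂ : L, m₁ ≠ m₂ → VarOccurs m₁ m₂ → VarOccurs m₂ m₁ → Ee m₁ m₂ = Ee m₂ m₁)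

/-- The edge relation of the directed graph `𝒢` on the meet-irreducibles. -/
def Gedge (m₁ m₂ : L) : Prop :=
  MeetIrred m₁ ∧ MeetIrred m₂ ∧ ∃ a ∈ Uset m₂, m₁ ∈ MnotAbove a

end Latticedefs

/-- The system `Ω` has a non-negative integer solution. -/
def HasSolOmega (L : Type*) [Lattice L] [OrderBot L] : Prop :=
  ∃ W Ee, SolvesOmega (L := L) W Ee

/-- The directed graph `𝒢` on the meet-irreducibles is acyclic. -/
def GAcyclic (L : Type*) [Lattice L] : Prop :=
  ∀ m : L, ¬ Relation.TransGen (Gedge (L := L)) m m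

/-!
Fix a firing sequence ending in the fixed point and let `m` be the multiset of vertices it fires.
The multisets fired by the various firing sequences are closed under union, and ordering them by
inclusion recovers the configuration space; so two games are equivalent as soon as these families
of multisets are isomorphic. The simple game has one vertex `(v, i)` for each of the
`m.count v` firings of `v`, and a sink. An edge of multiplicity `E u v` joins every copy of `u` to
every copy of `v`, and the copies of the same vertex `v` are moreover joined by a number of edges
that exceeds all the chips `v` ever sees. Initial chips are set so that `(v, i)` is short of
exactly the amount which makes it firable when `(v, 0), …, (v, i - 1)` have fired and `v` itself
would be firable for the `(i + 1)`-st time; the heavy edges prevent it from firing any earlier.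
-/

section ShotVectors

variable {V : Type*} {E : V → V → ℕ} {O c : V → ℕ} {l t : List V} {m n : Multiset V} {v : V}

lemma validSeq_append : ValidSeq E c (l ++ t) ↔ ValidSeq E c l ∧ ValidSeq E (fireList E c l) t := by
  induction l generalizing c with
  | nil => simp [ValidSeq, fireList]
  | cons a l ih => simp [ValidSeq, fireList, ih, and_assoc]

lemma fireList_append : fireList E c (l ++ t) = fireList E (fireList E c l) t := by
  induction l generalizing c with
  | nil => rfl
  | cons _ _ ih => exact ih

lemma coe_append_singleton (l : List V) (v : V) : ((l ++ [v] : List V) : Multiset V) = v ::ₘ ↑l :=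
  Multiset.coe_eq_coe.mpr (List.perm_append_singleton v l)

lemma union_cons_of_count_le (h : m.count v ≤ n.count v) : m ∪ (v ::ₘ n) = v ::ₘ (m ∪ n) := by
  ext a
  by_cases hav : a = v
  · subst hav
    simp only [Multiset.count_union, Multiset.count_cons_self]
    lia
  · simp only [Multiset.count_union, Multiset.count_cons_of_ne hav]

lemma union_cons_of_count_lt (h : n.count v < m.count v) : m ∪ (v ::ₘ n) = m ∪ n := by
  ext a
  by_cases hav : a = v
  · subst hav
    simp only [Multiset.count_union, Multiset.count_cons_self]
    lia
  · simp only [Multiset.count_union, Multiset.count_cons_of_ne hav]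

lemma validSeq_concat :
    ValidSeq E c (l ++ [v]) ↔ ValidSeq E c l ∧ Firable E (fireList E c l) v := by
  simp [validSeq_append, ValidSeq]

/-- The number of chips sent to `v` (along loops as well) when the vertices of `m` fire. -/
def inflow (E : V → V → ℕ) (m : Multiset V) (v : V) : ℕ := (m.map fun u => E u v).sum

lemma inflow_cons (E : V → V → ℕ) (a : V) (m : Multiset V) (v : V) :
    inflow E (a ::ₘ m) v = E a v + inflow E m v := by
  simp [inflow]

lemma inflow_mono (h : m ≤ n) (v : V) : inflow E m v ≤ inflow E n v := by
  obtain ⟨k, rfl⟩ := Multiset.le_iff_exists_add.mp h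
  simp [inflow]

/-- The configuration of the game after the vertices of `m` have fired, in any admissible order.
The truncated subtraction is exact when `m` is fired by a valid sequence. -/
noncomputable def configAfter (E : V → V → ℕ) (O : V → ℕ) (m : Multiset V) (v : V) : ℕ :=
  O v + inflow E m v - m.count v * outDeg E v

/-- Chip-balance form of "`v` is firable after the vertices of `m` have fired": since `v` sends out
`outDeg E v` chips per firing, it must have seen enough chips for one more firing. -/
def CanFire (E : V → V → ℕ) (O : V → ℕ) (m : Multiset V) (v : V) : Prop :=
  ¬ IsSink E v ∧ (m.count v + 1) * outDeg E v ≤ O v + inflow E m v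

lemma CanFire.mono (h : CanFire E O m v) (hmn : m ≤ n) (hv : n.count v = m.count v) :
    CanFire E O n v :=
  ⟨h.1, hv ▸ h.2.trans (Nat.add_le_add_left (inflow_mono hmn v) _)⟩

lemma fire_add_outDeg {a : V} (h : Firable E c a) (v : V) :
    fire E c a v + (if v = a then outDeg E v else 0) = c v + E a v := by
  by_cases hva : v = a
  · subst hva
    have hle := h.2
    simp only [fire, if_true]
    lia
  · simp [fire, hva]

lemma fireList_add_count_mul_outDeg (hl : ValidSeq E c l) (v : V) :
    fireList E c l v + l.count v * outDeg E v = c v + inflow E l v := by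
  induction l generalizing c with
  | nil => simp only [fireList, inflow, List.count_nil, Multiset.coe_nil, Multiset.map_zero,
      Multiset.sum_zero, zero_mul]
  | cons a l ih =>
    have hfire := fire_add_outDeg hl.1 v
    have hrest := ih hl.2
    rw [fireList, ← Multiset.cons_coe, inflow_cons]
    by_cases hva : v = a
    · subst hva
      rw [List.count_cons_self, add_one_mul]
      simp only [if_true] at hfire
      lia
    · rw [List.count_cons_of_ne (Ne.symm hva)]
      simp only [if_neg hva] at hfire
      lia

lemma fireList_eq_configAfter (hl : ValidSeq E O l) : fireList E O l = configAfter E O l := by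
  funext v
  have := fireList_add_count_mul_outDeg hl v
  rw [configAfter, Multiset.coe_count]
  lia

lemma firable_fireList_iff_canFire (hl : ValidSeq E O l) :
    Firable E (fireList E O l) v ↔ CanFire E O l v := by
  have := fireList_add_count_mul_outDeg hl v
  rw [Firable, CanFire, Multiset.coe_count, add_one_mul]
  exact and_congr_right fun _ => by lia

/-- The shot vectors of the game: the multisets of vertices fired by its firing sequences. -/
def shotVectors (E : V → V → ℕ) (O : V → ℕ) : Set (Multiset V) :=
  {m | ∃ l : List V, ValidSeq E O l ∧ (l : Multiset V) = m}

lemma zero_mem_shotVectors (E : V → V → ℕ) (O : V → ℕ) : 0 ∈ shotVectors E O :=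
  ⟨[], trivial, rfl⟩

lemma cons_mem_shotVectors (hm : m ∈ shotVectors E O) (hv : CanFire E O m v) :
    v ::ₘ m ∈ shotVectors E O := by
  obtain ⟨l, hl, rfl⟩ := hm
  exact ⟨l ++ [v], validSeq_concat.mpr ⟨hl, (firable_fireList_iff_canFire hl).mpr hv⟩,
    coe_append_singleton l v⟩

lemma shotVectors_induction {motive : Multiset V → Prop} (zero : motive 0)
    (cons : ∀ m ∈ shotVectors E O, ∀ v, CanFire E O m v → motive m → motive (v ::ₘ m))
    (hm : m ∈ shotVectors E O) : motive m := by
  obtain ⟨l, hl, rfl⟩ := hm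
  induction l using List.reverseRecOn with
  | nil => exact zero
  | append_singleton l v ih =>
    obtain ⟨hl, hv⟩ := validSeq_concat.mp hl
    rw [coe_append_singleton]
    exact cons l ⟨l, hl, rfl⟩ v ((firable_fireList_iff_canFire hl).mp hv) (ih hl)

lemma not_isSink_of_mem_shotVectors (hm : m ∈ shotVectors E O) (hv : v ∈ m) : ¬ IsSink E v := by
  revert hv
  refine shotVectors_induction (motive := fun m => v ∈ m → ¬ IsSink E v)
    (fun hv => absurd hv (Multiset.notMem_zero v)) (fun m _ a ha ih hv => ?_) hm
  rcases Multiset.mem_cons.mp hv with rfl | hv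
  exacts [ha.1, ih hv]

-- Extend `l` along `t`: if `v` is firable after `t` and has fired at most as often in `l`, it stays
-- firable once the firings of `t` missing from `l` are made up for, because `v` has then fired
-- equally often and every other vertex at least as often.
lemma exists_validSeq_append_union (hl : ValidSeq E O l) (ht : ValidSeq E O t) :
    ∃ r : List V, ValidSeq E O (l ++ r) ∧ ((l ++ r : List V) : Multiset V) = ↑l ∪ ↑t := by
  induction t using List.reverseRecOn with
  | nil => exact ⟨[], by simpa using hl, by simp⟩
  | append_singleton t v ih =>
    obtain ⟨ht, hv⟩ := validSeq_concat.mp ht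
    obtain ⟨r, hr, hrt⟩ := ih ht
    rw [coe_append_singleton]
    rcases le_or_gt ((l : Multiset V).count v) ((t : Multiset V).count v) with hle | hlt
    · have hfire : CanFire E O ↑(l ++ r) v := by
        refine ((firable_fireList_iff_canFire ht).mp hv).mono (hrt ▸ Multiset.le_union_right) ?_
        rw [hrt, Multiset.count_union, max_eq_right hle]
      refine ⟨r ++ [v], ?_, ?_⟩
      · rw [← List.append_assoc]
        exact validSeq_concat.mpr ⟨hr, (firable_fireList_iff_canFire hr).mpr hfire⟩
      · rw [← List.append_assoc, coe_append_singleton, hrt, union_cons_of_count_le hle]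
    · exact ⟨r, hr, hrt.trans (union_cons_of_count_lt hlt).symm⟩

lemma exists_validSeq_append_of_le (hl : ValidSeq E O l) (ht : ValidSeq E O t)
    (h : (l : Multiset V) ≤ t) :
    ∃ r : List V, ValidSeq E O (l ++ r) ∧ ((l ++ r : List V) : Multiset V) = t := by
  obtain ⟨r, hr, hrt⟩ := exists_validSeq_append_union hl ht
  exact ⟨r, hr, hrt.trans (Multiset.eq_union_right h)⟩

lemma reaches_configAfter_of_le (hm : m ∈ shotVectors E O) (hn : n ∈ shotVectors E O)
    (h : m ≤ n) : Reaches E (configAfter E O m) (configAfter E O n) := by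
  obtain ⟨l, hl, rfl⟩ := hm
  obtain ⟨t, ht, rfl⟩ := hn
  obtain ⟨r, hr, hrt⟩ := exists_validSeq_append_of_le hl ht h
  refine ⟨r, ?_, ?_⟩
  · rw [← fireList_eq_configAfter hl]
    exact (validSeq_append.mp hr).2
  · rw [← fireList_eq_configAfter hl, ← fireList_append, fireList_eq_configAfter hr, hrt]

lemma fixedPt_fireList_iff_isGreatest (hl : ValidSeq E O l) :
    FixedPt E (fireList E O l) ↔ IsGreatest (shotVectors E O) l := by
  constructor
  · intro hfix
    refine ⟨⟨l, hl, rfl⟩, ?_⟩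
    rintro _ ⟨t, ht, rfl⟩
    obtain ⟨r, hr, hrt⟩ := exists_validSeq_append_union hl ht
    cases r with
    | nil =>
      rw [List.append_nil] at hrt
      exact hrt ▸ Multiset.le_union_right
    | cons v r => exact absurd (validSeq_append.mp hr).2.1 (hfix v)
  · intro hmax v hv
    have hcons := cons_mem_shotVectors hmax.1 ((firable_fireList_iff_canFire hl).mp hv)
    exact (Multiset.lt_cons_self _ v).not_ge (hmax.2 hcons)

lemma reachesUFP_iff_exists_isGreatest :
    ReachesUFP E O ↔ ∃ m, IsGreatest (shotVectors E O) m := by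
  constructor
  · rintro ⟨_, ⟨l, hl, rfl⟩, hfix, -⟩
    exact ⟨l, (fixedPt_fireList_iff_isGreatest hl).mp hfix⟩
  · rintro ⟨_, hmax⟩
    obtain ⟨l, hl, rfl⟩ := hmax.1
    refine ⟨fireList E O l, ⟨l, hl, rfl⟩, (fixedPt_fireList_iff_isGreatest hl).mpr hmax, ?_⟩
    rintro _ ⟨t, ht, rfl⟩
    have htmem : (t : Multiset V) ∈ shotVectors E O := ⟨t, ht, rfl⟩
    rw [fireList_eq_configAfter hl, fireList_eq_configAfter ht]
    exact reaches_configAfter_of_le htmem hmax.1 (hmax.2 htmem)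

-- A sequence completing `l` to the fixed point completes `t` as well, and all the sequences ending
-- in the fixed point fire the same multiset.
lemma coe_eq_of_fireList_eq (hUFP : ReachesUFP E O) (hl : ValidSeq E O l) (ht : ValidSeq E O t)
    (h : fireList E O l = fireList E O t) : (l : Multiset V) = t := by
  obtain ⟨fp, -, hfix, hall⟩ := hUFP
  obtain ⟨r, hr, rfl⟩ := hall _ ⟨l, hl, rfl⟩
  have hlr : ValidSeq E O (l ++ r) := validSeq_append.mpr ⟨hl, hr⟩
  have htr : ValidSeq E O (t ++ r) := validSeq_append.mpr ⟨ht, h ▸ hr⟩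
  have hlmax : IsGreatest (shotVectors E O) ↑(l ++ r) :=
    (fixedPt_fireList_iff_isGreatest hlr).mp (by rwa [fireList_append])
  have htmax : IsGreatest (shotVectors E O) ↑(t ++ r) :=
    (fixedPt_fireList_iff_isGreatest htr).mp (by rwa [fireList_append, ← h])
  have heq := hlmax.unique htmax
  rwa [← Multiset.coe_add, ← Multiset.coe_add, add_left_inj] at heq

lemma reaches_configAfter_iff_le (hUFP : ReachesUFP E O) (hm : m ∈ shotVectors E O)
    (hn : n ∈ shotVectors E O) :
    Reaches E (configAfter E O m) (configAfter E O n) ↔ m ≤ n := by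
  refine ⟨?_, reaches_configAfter_of_le hm hn⟩
  obtain ⟨l, hl, rfl⟩ := hm
  obtain ⟨t, ht, rfl⟩ := hn
  rw [← fireList_eq_configAfter hl, ← fireList_eq_configAfter ht]
  rintro ⟨r, hr, hrt⟩
  rw [← fireList_append] at hrt
  rw [← coe_eq_of_fireList_eq hUFP (validSeq_append.mpr ⟨hl, hr⟩) ht hrt, ← Multiset.coe_add]
  exact Multiset.le_add_right _ _

lemma reaches_configAfter (hm : m ∈ shotVectors E O) : Reaches E O (configAfter E O m) := by
  obtain ⟨l, hl, rfl⟩ := hm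
  exact ⟨l, hl, fireList_eq_configAfter hl⟩

/-- The shot vectors of a game reaching a unique fixed point parametrise its configuration space;
by `reaches_configAfter_iff_le`, inclusion corresponds to reachability. -/
noncomputable def shotVectorsEquiv (hUFP : ReachesUFP E O) :
    shotVectors E O ≃ {c : V → ℕ // Reaches E O c} :=
  Equiv.ofBijective (fun m => ⟨configAfter E O m, reaches_configAfter m.2⟩) <| by
    constructor
    · intro m n hmn
      have heq : configAfter E O m = configAfter E O n := congrArg Subtype.val hmn
      refine Subtype.ext (le_antisymm ?_ ?_)
      · exact (reaches_configAfter_iff_le hUFP m.2 n.2).mp (heq ▸ ⟨[], trivial, rfl⟩)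
      · exact (reaches_configAfter_iff_le hUFP n.2 m.2).mp (heq ▸ ⟨[], trivial, rfl⟩)
    · rintro ⟨_, l, hl, rfl⟩
      exact ⟨⟨l, l, hl, rfl⟩, Subtype.ext (fireList_eq_configAfter hl).symm⟩

lemma reaches_shotVectorsEquiv_iff (hUFP : ReachesUFP E O) (m n : shotVectors E O) :
    Reaches E (shotVectorsEquiv hUFP m).val (shotVectorsEquiv hUFP n).val ↔ m ≤ n :=
  reaches_configAfter_iff_le hUFP m.2 n.2

end ShotVectors

section Equivalence

variable {V W : Type*} {E : V → V → ℕ} {O : V → ℕ} {E' : W → W → ℕ} {O' : W → ℕ}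

lemma exists_equiv_of_orderIso_shotVectors (hUFP : ReachesUFP E O) (hUFP' : ReachesUFP E' O')
    (φ : shotVectors E O ≃o shotVectors E' O') :
    ∃ g : {c : V → ℕ // Reaches E O c} ≃ {c : W → ℕ // Reaches E' O' c},
      ∀ a b : {c : V → ℕ // Reaches E O c},
        Reaches E a.val b.val ↔ Reaches E' (g a).val (g b).val := by
  let f := shotVectorsEquiv hUFP
  let f' := shotVectorsEquiv hUFP'
  refine ⟨f.symm.trans (φ.toEquiv.trans f'), fun a b => ?_⟩
  obtain ⟨m, rfl⟩ := f.surjective a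
  obtain ⟨n, rfl⟩ := f.surjective b
  calc Reaches E (f m).val (f n).val
      ↔ m ≤ n := reaches_shotVectorsEquiv_iff hUFP m n
    _ ↔ φ m ≤ φ n := φ.le_iff_le.symm
    _ ↔ Reaches E' (f' (φ m)).val (f' (φ n)).val :=
        (reaches_shotVectorsEquiv_iff hUFP' _ _).symm
    _ ↔ _ := by simp

lemma image_shotVectors_eq {Φ : Multiset V → Multiset W} (zero : Φ 0 = 0)
    (forward : ∀ n ∈ shotVectors E O, ∀ v, CanFire E O n v →
      ∃ w, CanFire E' O' (Φ n) w ∧ Φ (v ::ₘ n) = w ::ₘ Φ n)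
    (backward : ∀ n ∈ shotVectors E O, ∀ w, CanFire E' O' (Φ n) w →
      ∃ v, CanFire E O n v ∧ Φ (v ::ₘ n) = w ::ₘ Φ n) :
    Φ '' shotVectors E O = shotVectors E' O' := by
  apply Set.Subset.antisymm
  · rintro _ ⟨n, hn, rfl⟩
    refine shotVectors_induction (motive := fun n => Φ n ∈ shotVectors E' O') ?_
      (fun n hn v hv ih => ?_) hn
    · exact zero.symm ▸ zero_mem_shotVectors E' O'
    · obtain ⟨w, hw, heq⟩ := forward n hn v hv
      exact heq ▸ cons_mem_shotVectors ih hw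
  · intro k hk
    refine shotVectors_induction ⟨0, zero_mem_shotVectors E O, zero⟩ (fun k _ w hw ih => ?_) hk
    obtain ⟨n, hn, rfl⟩ := ih
    obtain ⟨v, hv, heq⟩ := backward n hn w hw
    exact ⟨v ::ₘ n, cons_mem_shotVectors hn hv, heq⟩

lemma exists_equiv_of_image_shotVectors_eq {Φ : Multiset V → Multiset W}
    (hUFP : ReachesUFP E O) (himage : Φ '' shotVectors E O = shotVectors E' O')
    (hle : ∀ m ∈ shotVectors E O, ∀ n ∈ shotVectors E O, Φ m ≤ Φ n ↔ m ≤ n) :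
    ReachesUFP E' O' ∧
      ∃ g : {c : V → ℕ // Reaches E O c} ≃ {c : W → ℕ // Reaches E' O' c},
        ∀ a b : {c : V → ℕ // Reaches E O c},
          Reaches E a.val b.val ↔ Reaches E' (g a).val (g b).val := by
  have hUFP' : ReachesUFP E' O' := by
    obtain ⟨m, hm⟩ := reachesUFP_iff_exists_isGreatest.mp hUFP
    refine reachesUFP_iff_exists_isGreatest.mpr ⟨Φ m, himage ▸ ⟨⟨m, hm.1, rfl⟩, ?_⟩⟩
    rintro _ ⟨n, hn, rfl⟩
    exact (hle n hn m hm.1).mpr (hm.2 hn)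
  let φ : shotVectors E O ↪o shotVectors E' O' :=
    OrderEmbedding.ofMapLEIff (fun m => ⟨Φ m, himage ▸ ⟨m, m.2, rfl⟩⟩)
      fun m n => hle m m.2 n n.2
  have hφ : Function.Surjective φ := by
    rintro ⟨k, hk⟩
    obtain ⟨m, hm, rfl⟩ := himage.symm ▸ hk
    exact ⟨⟨m, hm⟩, rfl⟩
  exact ⟨hUFP', exists_equiv_of_orderIso_shotVectors hUFP hUFP' (RelIso.ofSurjective φ hφ)⟩

end Equivalence

section ThresholdSandpile

lemma count_map_val {α β : Type*} {f : α → β} (hf : Function.Injective f) (s : Finset α) (a : α) :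
    (s.val.map f).count (f a) = if a ∈ s then 1 else 0 := by
  rw [Multiset.count_map_eq_count' f s.val hf, Multiset.count_eq_of_nodup s.nodup]
  rfl

variable {P : Type*} [Fintype P] {w : P → P → ℕ} {θ : P → ℕ}

/-- The common out-degree of the vertices of `thresholdEdge w θ`, chosen to exceed every threshold
and the total weight at every vertex. -/
def thresholdCapacity (w : P → P → ℕ) (θ : P → ℕ) : ℕ :=
  1 + ∑ p, θ p + ∑ p, ∑ q, w p q

/-- The graph on `P` with edge multiplicities `w` and a new sink `none`, to which every vertex
sends enough edges to have out-degree `thresholdCapacity w θ`. -/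
def thresholdEdge (w : P → P → ℕ) (θ : P → ℕ) : Option P → Option P → ℕ
  | none, _ => 0
  | some p, none => thresholdCapacity w θ - ∑ q, w p q
  | some p, some q => w p q

/-- The initial configuration on `thresholdEdge w θ` in which `p` lacks `θ p` chips to be
firable. -/
def thresholdInit (w : P → P → ℕ) (θ : P → ℕ) : Option P → ℕ
  | none => 0
  | some p => thresholdCapacity w θ - θ p

lemma threshold_le_capacity (w : P → P → ℕ) (θ : P → ℕ) (p : P) :
    θ p ≤ thresholdCapacity w θ := by
  have : θ p ≤ ∑ p, θ p := Finset.single_le_sum_of_canonicallyOrdered (Finset.mem_univ p)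
  rw [thresholdCapacity]
  lia

lemma sum_weight_out_lt_capacity (w : P → P → ℕ) (θ : P → ℕ) (p : P) :
    ∑ q, w p q < thresholdCapacity w θ := by
  have : ∑ q, w p q ≤ ∑ p, ∑ q, w p q :=
    Finset.single_le_sum_of_canonicallyOrdered (f := fun p => ∑ q, w p q) (Finset.mem_univ p)
  rw [thresholdCapacity]
  lia

lemma sum_weight_in_lt_capacity (w : P → P → ℕ) (θ : P → ℕ) (s : Finset P) (p : P) :
    ∑ q ∈ s, w q p < thresholdCapacity w θ := by
  have : ∑ q ∈ s, w q p ≤ ∑ q, ∑ p, w q p :=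
    calc ∑ q ∈ s, w q p
        ≤ ∑ q, w q p := Finset.sum_le_univ_sum_of_nonneg fun _ => Nat.zero_le _
      _ ≤ ∑ q, ∑ p, w q p := Finset.sum_le_sum fun q _ =>
          Finset.single_le_sum_of_canonicallyOrdered (Finset.mem_univ p)
  rw [thresholdCapacity]
  lia

lemma outDeg_thresholdEdge_some (w : P → P → ℕ) (θ : P → ℕ) (p : P) :
    outDeg (thresholdEdge w θ) (some p) = thresholdCapacity w θ := by
  rw [outDeg, finsum_eq_sum_of_fintype, Fintype.sum_option]
  exact Nat.sub_add_cancel (sum_weight_out_lt_capacity w θ p).le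

lemma isSink_thresholdEdge_none (w : P → P → ℕ) (θ : P → ℕ) :
    IsSink (thresholdEdge w θ) none := by
  simp [IsSink, outDeg, thresholdEdge]

lemma not_isSink_thresholdEdge_some (w : P → P → ℕ) (θ : P → ℕ) (p : P) :
    ¬ IsSink (thresholdEdge w θ) (some p) := by
  have hloop : w p p < thresholdCapacity w θ := by
    simpa using sum_weight_in_lt_capacity w θ {p} p
  rw [IsSink, outDeg_thresholdEdge_some]
  exact hloop.ne'

lemma isASM_thresholdEdge (hw : ∀ p q, w p q = w q p) (θ : P → ℕ) :
    IsASM (thresholdEdge w θ) := by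
  have hpos : ∀ p, 0 < thresholdEdge w θ (some p) none := fun p =>
    Nat.sub_pos_of_lt (sum_weight_out_lt_capacity w θ p)
  have hto : ∀ x, Relation.ReflTransGen
      (fun a b => 0 < thresholdEdge w θ a b ∨ 0 < thresholdEdge w θ b a) x none
    | none => .refl
    | some p => .single (Or.inl (hpos p))
  have hfrom : ∀ x, Relation.ReflTransGen
      (fun a b => 0 < thresholdEdge w θ a b ∨ 0 < thresholdEdge w θ b a) none x
    | none => .refl
    | some p => .single (Or.inr (hpos p))
  refine ⟨fun u v => (hto u).trans (hfrom v), none, isSink_thresholdEdge_none w θ, ?_, ?_⟩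
  · rintro (_ | p) hp
    · rfl
    · exact absurd hp (not_isSink_thresholdEdge_some w θ p)
  · rintro (_ | p) (_ | q) - hp hq
    · rfl
    · exact absurd rfl hp
    · exact absurd rfl hq
    · exact hw p q

lemma inflow_thresholdEdge (w : P → P → ℕ) (θ : P → ℕ) (s : Finset P) (p : P) :
    inflow (thresholdEdge w θ) (s.val.map some) (some p) = ∑ q ∈ s, w q p := by
  rw [inflow, Multiset.map_map]
  rfl

lemma canFire_threshold_iff (s : Finset P) (p : P) :
    CanFire (thresholdEdge w θ) (thresholdInit w θ) (s.val.map some) (some p) ↔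
      p ∉ s ∧ θ p ≤ ∑ q ∈ s, w q p := by
  have hθ := threshold_le_capacity w θ p
  have hin := sum_weight_in_lt_capacity w θ s p
  rw [CanFire, outDeg_thresholdEdge_some, inflow_thresholdEdge, thresholdInit,
    count_map_val (Option.some_injective P)]
  by_cases hp : p ∈ s
  · simp only [hp, if_true, not_true_eq_false, false_and, iff_false, not_and]
    lia
  · simp only [hp, if_false, not_false_eq_true, true_and, not_isSink_thresholdEdge_some]
    lia

end ThresholdSandpile

section Unfolding

variable {V P : Type*} {E : V → V → ℕ} {O : V → ℕ} {m n : Multiset V} {π : P ↪ V × ℕ} {p : P}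

lemma exists_copy (hπ : Set.range π = m.toEnumFinset) {v : V}
    (hv : v ::ₘ n ≤ m) : ∃ p, π p = (v, n.count v) := by
  have : (v, n.count v) ∈ Set.range π := by
    have hcount := Multiset.count_le_of_le v hv
    rw [Multiset.count_cons_self] at hcount
    simpa [hπ] using hcount
  exact this

lemma fst_mem_of_range_eq (hπ : Set.range π = m.toEnumFinset) (p : P) : (π p).1 ∈ m :=
  Multiset.mem_of_mem_toEnumFinset (Finset.mem_coe.mp (hπ ▸ Set.mem_range_self p))

/-- The number of additional edges between any two copies of `v`; it exceeds the number of chips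
that `v` sees while the vertices of `m` fire. -/
noncomputable def copyGap (E : V → V → ℕ) (O : V → ℕ) (m : Multiset V) (v : V) : ℕ :=
  O v + inflow E m v + 1

/-- The edge multiplicities between the copies of the vertices, where `π p = (v, i)` says that `p`
is the copy number `i` of `v`. -/
noncomputable def unfoldWeight (E : V → V → ℕ) (O : V → ℕ) (m : Multiset V) (π : P ↪ V × ℕ)
    (p q : P) : ℕ :=
  (if (π p).1 = (π q).1 then copyGap E O m (π q).1 else 0) + E (π p).1 (π q).1

/-- The number of chips that the copy `(v, i)` has to receive before firing: the `i` earlier copies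
contribute `i * copyGap E O m v`, and the rest is what `v` needs to receive, on top of its initial
chips, for its firing number `i + 1`. -/
noncomputable def unfoldThreshold (E : V → V → ℕ) (O : V → ℕ) (m : Multiset V) (π : P ↪ V × ℕ)
    (p : P) : ℕ :=
  (π p).2 * copyGap E O m (π p).1 + ((π p).2 + 1) * outDeg E (π p).1 - O (π p).1

lemma unfoldWeight_comm (hsymm : ∀ u v, ¬ IsSink E u → ¬ IsSink E v → E u v = E v u)
    (hm : m ∈ shotVectors E O) (hπ : Set.range π = m.toEnumFinset) (p q : P) :
    unfoldWeight E O m π p q = unfoldWeight E O m π q p := by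
  have hsink : ∀ r, ¬ IsSink E (π r).1 := fun r =>
    not_isSink_of_mem_shotVectors hm (fst_mem_of_range_eq hπ r)
  by_cases h : (π p).1 = (π q).1
  · simp [unfoldWeight, h]
  · simp [unfoldWeight, h, Ne.symm h, hsymm _ _ (hsink p) (hsink q)]

variable [Fintype P]

/-- The copies fired in the unfolded game when the original game has fired `n`: the first
`n.count v` copies of every vertex `v`. -/
noncomputable def firstCopies (π : P ↪ V × ℕ) (n : Multiset V) : Finset P :=
  {p | π p ∈ n.toEnumFinset}

lemma mem_firstCopies : p ∈ firstCopies π n ↔ (π p).2 < n.count (π p).1 := by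
  simp [firstCopies]

lemma firstCopies_zero (π : P ↪ V × ℕ) : firstCopies π 0 = ∅ := by
  simp [firstCopies]

lemma firstCopies_cons (hp : (π p).2 = n.count (π p).1) :
    firstCopies π ((π p).1 ::ₘ n) = (firstCopies π n).cons p (by simp [mem_firstCopies, hp]) := by
  ext q
  rw [Finset.mem_cons, mem_firstCopies, mem_firstCopies, ← π.injective.eq_iff, Prod.ext_iff, hp]
  by_cases hvertex : (π q).1 = (π p).1
  · rw [hvertex, Multiset.count_cons_self]
    lia
  · simp [hvertex]

lemma map_firstCopies (hπ : Set.range π = m.toEnumFinset) (hn : n ≤ m) :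
    (firstCopies π n).map π = n.toEnumFinset := by
  have hsub : (n.toEnumFinset : Set (V × ℕ)) ⊆ Set.range π :=
    hπ ▸ Finset.coe_subset.mpr (Multiset.toEnumFinset_mono hn)
  ext x
  rw [Finset.mem_map]
  constructor
  · rintro ⟨p, hp, rfl⟩
    exact (Multiset.mem_toEnumFinset _ _).mpr (mem_firstCopies.mp hp)
  · intro hx
    obtain ⟨p, rfl⟩ := hsub hx
    exact ⟨p, mem_firstCopies.mpr ((Multiset.mem_toEnumFinset _ _).mp hx), rfl⟩

lemma map_fst_firstCopies (hπ : Set.range π = m.toEnumFinset) (hn : n ≤ m) :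
    (firstCopies π n).val.map (fun p => (π p).1) = n := by
  calc (firstCopies π n).val.map (fun p => (π p).1)
      = ((firstCopies π n).map π).val.map Prod.fst := by
        rw [Finset.map_val, Multiset.map_map]
        rfl
    _ = n := by rw [map_firstCopies hπ hn, Multiset.map_toEnumFinset_fst]

lemma firstCopies_subset_iff (hπ : Set.range π = m.toEnumFinset) {k : Multiset V} (hn : n ≤ m)
    (hk : k ≤ m) : firstCopies π n ⊆ firstCopies π k ↔ n ≤ k := by
  rw [← Finset.map_subset_map (f := π), map_firstCopies hπ hn, map_firstCopies hπ hk,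
    Multiset.toEnumFinset_subset_iff]

lemma sum_unfoldWeight_firstCopies (hπ : Set.range π = m.toEnumFinset) (hn : n ≤ m) (p : P) :
    ∑ q ∈ firstCopies π n, unfoldWeight E O m π q p =
      n.count (π p).1 * copyGap E O m (π p).1 + inflow E n (π p).1 := by
  let weight : V → ℕ := fun u =>
    (if u = (π p).1 then copyGap E O m (π p).1 else 0) + E u (π p).1
  calc ∑ q ∈ firstCopies π n, unfoldWeight E O m π q p
      = (((firstCopies π n).val.map fun q => (π q).1).map weight).sum := by
        rw [Multiset.map_map]
        rfl
    _ = (n.map weight).sum := by rw [map_fst_firstCopies hπ hn]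
    _ = _ := by
        rw [Multiset.sum_map_add, Multiset.sum_map_eq_nsmul_single (π p).1
          (fun u hu _ => if_neg hu), if_pos rfl, smul_eq_mul, inflow]

lemma canFire_unfold_iff (hm : m ∈ shotVectors E O) (hπ : Set.range π = m.toEnumFinset)
    (hn : n ≤ m) (p : P) :
    CanFire (thresholdEdge (unfoldWeight E O m π) (unfoldThreshold E O m π))
        (thresholdInit (unfoldWeight E O m π) (unfoldThreshold E O m π))
        ((firstCopies π n).val.map some) (some p) ↔
      (π p).2 = n.count (π p).1 ∧ CanFire E O n (π p).1 := by
  have hsink : ¬ IsSink E (π p).1 :=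
    not_isSink_of_mem_shotVectors hm (fst_mem_of_range_eq hπ p)
  have hgap : O (π p).1 + inflow E n (π p).1 < copyGap E O m (π p).1 :=
    Nat.lt_succ_of_le (Nat.add_le_add_left (inflow_mono hn _) _)
  rw [canFire_threshold_iff, mem_firstCopies, sum_unfoldWeight_firstCopies hπ hn, unfoldThreshold,
    tsub_le_iff_right, CanFire, not_lt]
  generalize copyGap E O m (π p).1 = N at *
  generalize (π p).2 = i
  generalize n.count (π p).1 = k
  constructor
  · rintro ⟨hki, hle⟩
    have hik : i = k := by
      by_contra! hne
      have hlt : (k + 1) * N ≤ i * N := Nat.mul_le_mul_right N (by lia)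
      rw [add_one_mul] at hlt
      lia
    subst hik
    exact ⟨rfl, hsink, by lia⟩
  · rintro ⟨rfl, -, hle⟩
    exact ⟨le_rfl, by lia⟩

theorem image_shotVectors_unfold (hm : IsGreatest (shotVectors E O) m)
    (hπ : Set.range π = m.toEnumFinset) :
    (fun n => (firstCopies π n).val.map some) '' shotVectors E O =
      shotVectors (thresholdEdge (unfoldWeight E O m π) (unfoldThreshold E O m π))
        (thresholdInit (unfoldWeight E O m π) (unfoldThreshold E O m π)) := by
  have hcons : ∀ {n : Multiset V} {p : P}, (π p).2 = n.count (π p).1 →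
      (firstCopies π ((π p).1 ::ₘ n)).val.map some =
        some p ::ₘ (firstCopies π n).val.map some := fun hp => by
    rw [firstCopies_cons hp, Finset.cons_val, Multiset.map_cons]
  refine image_shotVectors_eq (by simp [firstCopies_zero]) (fun n hn v hv => ?_)
    (fun n hn x hx => ?_)
  · obtain ⟨p, hp⟩ := exists_copy hπ (hm.2 (cons_mem_shotVectors hn hv))
    obtain ⟨rfl, hi⟩ := Prod.ext_iff.mp hp
    exact ⟨some p, (canFire_unfold_iff hm.1 hπ (hm.2 hn) p).mpr ⟨hi, hv⟩, hcons hi⟩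
  · cases x with
    | none => exact absurd (isSink_thresholdEdge_none _ _) hx.1
    | some p =>
      obtain ⟨hi, hv⟩ := (canFire_unfold_iff hm.1 hπ (hm.2 hn) p).mp hx
      exact ⟨(π p).1, hv, hcons hi⟩

end Unfolding

theorem stmt13_general {V : Type*} (E : V → V → ℕ) (O : V → ℕ)
    (_hfinite : ∀ v, (Function.support (E v)).Finite)
    (hsymm : ∀ u v, ¬ IsSink E u → ¬ IsSink E v → E u v = E v u) (hUFP : ReachesUFP E O) :
    ∃ (V' : Type) (_ : Finite V') (E' : V' → V' → ℕ) (O' : V' → ℕ),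
      IsASM E' ∧ ReachesUFP E' O' ∧ SimpleCFG E' O' ∧
      ∃ g : {c : V → ℕ // Reaches E O c} ≃ {c : V' → ℕ // Reaches E' O' c},
        ∀ a b : {c : V → ℕ // Reaches E O c},
          Reaches E a.val b.val ↔ Reaches E' (g a).val (g b).val := by
  obtain ⟨m, hm⟩ := reachesUFP_iff_exists_isGreatest.mp hUFP
  let π : Fin m.toEnumFinset.card ↪ V × ℕ :=
    m.toEnumFinset.equivFin.symm.toEmbedding.trans (Function.Embedding.subtype _)
  have hπ : Set.range π = m.toEnumFinset := 
    (EquivLike.range_comp Subtype.val m.toEnumFinset.equivFin.symm).trans Subtype.range_coe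
  have himage := image_shotVectors_unfold hm hπ
  have hle : ∀ n ∈ shotVectors E O, ∀ k ∈ shotVectors E O,
      (firstCopies π n).val.map some ≤ (firstCopies π k).val.map some ↔ n ≤ k := fun n hn k hk => by
    rw [Multiset.map_le_map_iff (Option.some_injective _), Finset.val_le_iff,
      firstCopies_subset_iff hπ (hm.2 hn) (hm.2 hk)]
  obtain ⟨hUFP', hequiv⟩ := exists_equiv_of_image_shotVectors_eq hUFP himage hle
  refine ⟨_, inferInstance, _, _, isASM_thresholdEdge (unfoldWeight_comm hsymm hm.1 hπ) _, hUFP',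
    fun l hl _ => ?_, hequiv⟩
  obtain ⟨n, -, hn⟩ := himage.ge ⟨l, hl, rfl⟩
  exact Multiset.coe_nodup.mp (hn ▸ (firstCopies π n).nodup.map (Option.some_injective _))

/-- every ASM reaching a unique fixed point is equivalent to a simple
ASM: there is a simple ASM whose configuration space is order-isomorphic to that of
the given one. -/
theorem stmt13 {V : Type*} [Finite V] (E : V → V → ℕ) (O : V → ℕ)
    (hASM : IsASM E) (hUFP : ReachesUFP E O) :
    ∃ (V' : Type) (_ : Finite V') (E' : V' → V' → ℕ) (O' : V' → ℕ),
      IsASM E' ∧ ReachesUFP E' O' ∧ SimpleCFG E' O' ∧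
      ∃ g : {c : V → ℕ // Reaches E O c} ≃ {c : V' → ℕ // Reaches E' O' c},
        ∀ a b : {c : V → ℕ // Reaches E O c},
          Reaches E a.val b.val ↔ Reaches E' (g a).val (g b).val := by
  obtain ⟨-, s, hs, -, hE⟩ := hASM
  exact stmt13_general E O (fun _ => Set.toFinite _) (fun u v hu hv => by
    by_cases huv : u = v
    · rw [huv]
    · exact hE u v huv (fun h => hu (h ▸ hs)) (fun h => hv (h ▸ hs))) hUFP
end

section
/- In a finite ULD lattice L, every maximal chain from ⊥ to ⊤ has length equal to the number of meet-irreducibles of L: if ⊥ = c₀ ⋖ c₁ ⋖ ⋯ ⋖ c_N = ⊤ is a chain of covers, then N = |M|. -/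
open Classical

/-!
A finite ULD lattice is upper semimodular and meet-semidistributive: both properties hold locally,
in the Boolean intervals `[x, x⁺]`, and spread upwards by well-founded induction. For a cover
`x ⋖ y` and a meet-irreducible `m` above `x` but not above `y`, semimodularity makes `m ⊔ y` the
unique upper cover of `m`, so `m` is maximal among the elements above `x` but not above `y`. By
meet-semidistributivity these elements are closed under binary joins, so `m` is unique. Hence every
step of a chain of covers loses exactly one meet-irreducible.
-/

section Covers

variable {L : Type*} [Lattice L] {x y z w : L}

theorem inf_eq_of_covBy_of_not_le (hy : x ⋖ y) (hz : x ≤ z) (hyz : ¬ y ≤ z) : y ⊓ z = x :=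
  (hy.eq_or_eq (le_inf hy.le hz) inf_le_left).resolve_right fun h => hyz (inf_eq_left.1 h)

theorem covBy_sup_of_covBy_of_not_le [IsUpperModularLattice L] (hy : x ⋖ y) (hz : x ≤ z)
    (hyz : ¬ y ≤ z) : z ⋖ z ⊔ y := by
  rw [sup_comm]
  exact CovBy.sup_of_inf_left ((inf_eq_of_covBy_of_not_le hy hz hyz).symm ▸ hy)

variable [WellFoundedGT L] [IsStronglyAtomic L]

theorem isUpperModularLattice_of_isWeakUpperModularLattice [IsWeakUpperModularLattice L] :
    IsUpperModularLattice L := by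
  have covBy_sup : ∀ x y z : L, x ⋖ y → x ≤ z → ¬ y ≤ z → z ⋖ z ⊔ y := by
    intro x
    induction x using WellFoundedGT.induction with
    | ind x ih =>
      intro y z hy hz hyz
      rcases hz.eq_or_lt with rfl | hlt
      · rwa [sup_eq_right.2 hy.le]
      · obtain ⟨t, ht, htz⟩ := exists_covBy_le_of_lt hlt
        have hinf : t ⊓ y = x :=
          inf_comm y t ▸ inf_eq_of_covBy_of_not_le hy ht.le fun h => hyz (h.trans htz)
        have hcov : t ⋖ t ⊔ y :=
          covBy_sup_of_inf_covBy_of_inf_covBy_left (hinf.symm ▸ ht) (hinf.symm ▸ hy)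
        have := ih t ht.lt (t ⊔ y) z hcov htz fun h => hyz (le_sup_right.trans h)
        rwa [← sup_assoc, sup_eq_left.2 htz] at this
  refine ⟨fun {a b} h => ?_⟩
  rw [sup_comm]
  exact covBy_sup _ _ _ h inf_le_right fun hab => h.ne (inf_eq_left.2 hab)

theorem not_le_sup_of_covBy [IsUpperModularLattice L]
    (hcov : ∀ ⦃x y z w : L⦄, x ⋖ y → x ⋖ z → x ⋖ w → ¬ y ≤ z → ¬ y ≤ w → ¬ y ≤ z ⊔ w)
    (hy : x ⋖ y) (hz : x ≤ z) (hw : x ≤ w) (hyz : ¬ y ≤ z) (hyw : ¬ y ≤ w) : ¬ y ≤ z ⊔ w := by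
  induction x using WellFoundedGT.induction generalizing y z w with
  | ind x ih =>
    rcases hz.eq_or_lt with rfl | hxz
    · rwa [sup_eq_right.2 hw]
    rcases hw.eq_or_lt with rfl | hxw
    · rwa [sup_eq_left.2 hz]
    have of_common_cover : ∀ t u v, x ⋖ t → t ≤ u → t ≤ v → ¬ y ≤ u → ¬ y ≤ v → ¬ y ≤ u ⊔ v :=
      fun t u v ht hu hv hyu hyv h =>
        ih t ht.lt (covBy_sup_of_covBy_of_not_le hy ht.le fun hyt => hyu (hyt.trans hu)) hu hv
          (fun h' => hyu (le_sup_right.trans h')) (fun h' => hyv (le_sup_right.trans h'))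
          (sup_le (hu.trans le_sup_left) h)
    -- `z ⊔ w` is built as `(z ⊔ (s ⊔ t)) ⊔ w`: each join is of two elements above a cover of `x`.
    obtain ⟨s, hs, hsz⟩ := exists_covBy_le_of_lt hxz
    obtain ⟨t, ht, htw⟩ := exists_covBy_le_of_lt hxw
    have hst : ¬ y ≤ s ⊔ t :=
      hcov hy hs ht (fun h => hyz (h.trans hsz)) fun h => hyw (h.trans htw)
    have hzt : ¬ y ≤ z ⊔ t := by
      have := of_common_cover s z (s ⊔ t) hs hsz le_sup_left hyz hst
      rwa [← sup_assoc, sup_eq_left.2 hsz] at this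
    have := of_common_cover t (z ⊔ t) w ht le_sup_right htw hzt hyw
    rwa [sup_assoc, sup_eq_right.2 htw] at this

end Covers

/-- Meet-semidistributivity: together with upper semimodularity it characterises upper local
distributivity in finite lattices, and it takes the place of `IsULD` when `L` may be infinite. -/
def IsMeetSemidistrib (L : Type*) [Lattice L] : Prop :=
  ∀ ⦃a b c : L⦄, a ⊓ b = a ⊓ c → a ⊓ (b ⊔ c) = a ⊓ b

theorem isMeetSemidistrib_of_covBy {L : Type*} [Lattice L] [WellFoundedGT L] [IsStronglyAtomic L]
    [IsUpperModularLattice L]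
    (hcov : ∀ ⦃x y z w : L⦄, x ⋖ y → x ⋖ z → x ⋖ w → ¬ y ≤ z → ¬ y ≤ w → ¬ y ≤ z ⊔ w) :
    IsMeetSemidistrib L := by
  intro a b c h
  have hle : a ⊓ b ≤ a ⊓ (b ⊔ c) := inf_le_inf_left a le_sup_left
  by_contra hne
  obtain ⟨y, hy, hya⟩ := exists_covBy_le_of_lt (hle.lt_of_ne' hne)
  have not_le : ∀ d, a ⊓ d = a ⊓ b → ¬ y ≤ d := fun d hd hyd =>
    hy.lt.not_ge (hd ▸ le_inf (hya.trans inf_le_left) hyd)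
  exact not_le_sup_of_covBy hcov hy inf_le_right (h ▸ inf_le_right) (not_le b rfl)
    (not_le c h.symm) (hya.trans inf_le_right)

theorem mem_Icc_uplus_of_covBy {L : Type*} [Lattice L] [Fintype L] [OrderBot L] {x y : L}
    (h : x ⋖ y) : y ∈ Set.Icc x (uplus x) := by
  refine ⟨h.le, ?_⟩
  simpa only [uplus, if_pos h] using
    Finset.le_sup (f := fun y => if x ⋖ y then y else ⊥) (Finset.mem_univ y)

namespace IsULD

variable {L : Type*} [Lattice L] [Fintype L] [BoundedOrder L] {x a b c : L}

theorem inf_sup_left_of_mem_Icc (hL : IsULD L) (hx : x ≠ ⊤) (ha : a ∈ Set.Icc x (uplus x))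
    (hb : b ∈ Set.Icc x (uplus x)) (hc : c ∈ Set.Icc x (uplus x)) :
    a ⊓ (b ⊔ c) = a ⊓ b ⊔ a ⊓ c := by
  obtain ⟨n, ⟨e⟩⟩ := hL x hx
  have distrib (u v w : Set.Icc x (uplus x)) : u ⊓ (v ⊔ w) = u ⊓ v ⊔ u ⊓ w :=
    e.injective (by simp only [map_inf, map_sup, inf_sup_left])
  exact congrArg Subtype.val (distrib ⟨a, ha⟩ ⟨b, hb⟩ ⟨c, hc⟩)

theorem isWeakUpperModularLattice (hL : IsULD L) : IsWeakUpperModularLattice L := by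
  refine ⟨fun {a b} ha hb => covBy_of_eq_or_eq (left_lt_sup.2 fun h => ?_) fun t hat htab => ?_⟩
  · exact hb.ne (inf_eq_right.2 h)
  · have ha' := mem_Icc_uplus_of_covBy ha
    have hb' := mem_Icc_uplus_of_covBy hb
    have ht : t = a ⊔ t ⊓ b := by
      have := hL.inf_sup_left_of_mem_Icc ha.lt.ne_top
        ⟨ha.le.trans hat, htab.trans (sup_le ha'.2 hb'.2)⟩ ha' hb'
      rwa [inf_eq_left.2 htab, inf_eq_right.2 hat] at this
    rcases hb.eq_or_eq (inf_le_inf_right b hat) inf_le_right with h | h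
    · exact Or.inl (by rw [ht, h, sup_inf_self])
    · exact Or.inr (by rw [ht, h])

theorem isUpperModularLattice (hL : IsULD L) : IsUpperModularLattice L :=
  haveI := hL.isWeakUpperModularLattice
  isUpperModularLattice_of_isWeakUpperModularLattice

theorem isMeetSemidistrib (hL : IsULD L) : IsMeetSemidistrib L := by
  have := hL.isUpperModularLattice
  refine isMeetSemidistrib_of_covBy fun x y z w hy hz hw hyz hyw h => hy.ne' ?_
  calc
    y = y ⊓ (z ⊔ w) := (inf_eq_left.2 h).symm
    _ = y ⊓ z ⊔ y ⊓ w := hL.inf_sup_left_of_mem_Icc hy.lt.ne_top (mem_Icc_uplus_of_covBy hy)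
      (mem_Icc_uplus_of_covBy hz) (mem_Icc_uplus_of_covBy hw)
    _ = x := by
      rw [inf_eq_of_covBy_of_not_le hy hz.le hyz, inf_eq_of_covBy_of_not_le hy hw.le hyw, sup_idem]

end IsULD

section MsetDiff

variable {L : Type*} [Lattice L] {x y z m : L}

theorem MsetDiff_self : MsetDiff x x = ∅ :=
  Set.eq_empty_of_forall_notMem fun _ hm => hm.2.2 hm.2.1

theorem MsetDiff_bot_top [BoundedOrder L] : MsetDiff (⊥ : L) ⊤ = {m | MeetIrred m} := by
  ext m
  refine ⟨And.left, fun hm => ⟨hm, bot_le, fun h => ?_⟩⟩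
  obtain ⟨y, hy, -⟩ := hm
  exact hy.lt.ne_top (top_le_iff.1 h)

theorem MsetDiff_union_MsetDiff (hxy : x ≤ y) (hyz : y ≤ z) :
    MsetDiff x y ∪ MsetDiff y z = MsetDiff x z := by
  ext m
  constructor
  · rintro (⟨hm, hxm, hym⟩ | ⟨hm, hym, hzm⟩)
    · exact ⟨hm, hxm, fun h => hym (hyz.trans h)⟩
    · exact ⟨hm, hxy.trans hym, hzm⟩
  · rintro ⟨hm, hxm, hzm⟩
    by_cases hym : y ≤ m
    · exact Or.inr ⟨hm, hym, hzm⟩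
    · exact Or.inl ⟨hm, hxm, hym⟩

theorem disjoint_MsetDiff_MsetDiff : Disjoint (MsetDiff x y) (MsetDiff y z) :=
  Set.disjoint_left.2 fun _ hxy hyz => hxy.2.2 hyz.2.1

theorem nonempty_MsetDiff [WellFoundedGT L] (h : ¬ y ≤ x) : (MsetDiff x y).Nonempty := by
  obtain ⟨m, hxm, hm⟩ := exists_maximal_ge_of_wellFoundedGT (fun z => ¬ y ≤ z) x h
  have sup_le_of_lt : ∀ z, m < z → m ⊔ y ≤ z := fun z hz =>
    sup_le hz.le (not_not.1 fun hyz => hm.not_gt hyz hz)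
  have hlt : m < m ⊔ y := left_lt_sup.2 hm.prop
  have hcov : m ⋖ m ⊔ y := ⟨hlt, fun z hz => (sup_le_of_lt z hz).not_gt⟩
  have hunique : ∀ z, m ⋖ z → z = m ⊔ y := fun z hz =>
    ((hz.eq_or_eq hlt.le (sup_le_of_lt z hz.lt)).resolve_left hlt.ne').symm
  exact ⟨m, ⟨m ⊔ y, hcov, hunique⟩, hxm, hm.prop⟩

theorem le_of_mem_MsetDiff_of_lt [IsStronglyAtomic L] [IsUpperModularLattice L] (hxy : x ⋖ y)
    (hm : m ∈ MsetDiff x y) (hmz : m < z) : y ≤ z := by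
  obtain ⟨t, ht, htz⟩ := exists_covBy_le_of_lt hmz
  have ht_eq : t = m ⊔ y := hm.1.unique ht (covBy_sup_of_covBy_of_not_le hxy hm.2.1 hm.2.2)
  exact le_sup_right.trans (ht_eq ▸ htz)

theorem subsingleton_MsetDiff [IsStronglyAtomic L] [IsUpperModularLattice L]
    (hL : IsMeetSemidistrib L) (hxy : x ⋖ y) : (MsetDiff x y).Subsingleton := by
  intro m hm m' hm'
  have inf_eq : ∀ k ∈ MsetDiff x y, y ⊓ k = x := fun k hk =>
    inf_eq_of_covBy_of_not_le hxy hk.2.1 hk.2.2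
  have not_le_sup : ¬ y ≤ m ⊔ m' := by
    rw [← inf_eq_left, hL ((inf_eq m hm).trans (inf_eq m' hm').symm), inf_eq m hm]
    exact hxy.ne
  have sup_eq : ∀ k ∈ MsetDiff x y, k ≤ m ⊔ m' → k = m ⊔ m' := fun k hk hle =>
    hle.eq_of_not_lt fun hlt => not_le_sup (le_of_mem_MsetDiff_of_lt hxy hk hlt)
  exact (sup_eq m hm le_sup_left).trans (sup_eq m' hm' le_sup_right).symm

theorem encard_MsetDiff_of_covBy [WellFoundedGT L] [IsStronglyAtomic L] [IsUpperModularLattice L]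
    (hL : IsMeetSemidistrib L) (hxy : x ⋖ y) : (MsetDiff x y).encard = 1 :=
  Set.encard_eq_one.2 <| Set.exists_eq_singleton_iff_nonempty_subsingleton.2
    ⟨nonempty_MsetDiff hxy.lt.not_ge, subsingleton_MsetDiff hL hxy⟩

end MsetDiff

theorem stmt17_general {L : Type*} [Lattice L] [WellFoundedGT L] [IsStronglyAtomic L]
    [IsUpperModularLattice L] (hL : IsMeetSemidistrib L) (N : ℕ) (c : ℕ → L)
    (hchain : ∀ i < N, c i ⋖ c (i + 1)) : (MsetDiff (c 0) (c N)).encard = N := by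
  induction N with
  | zero => simp only [MsetDiff_self, Set.encard_empty, Nat.cast_zero]
  | succ N ih =>
    have hstep : c N ⋖ c (N + 1) := hchain N N.lt_succ_self
    have hinit : ∀ i < N, c i ⋖ c (i + 1) := fun i hi => hchain i (hi.trans N.lt_succ_self)
    have hmono : MonotoneOn c (Set.Iic N) :=
      monotoneOn_of_le_add_one Set.ordConnected_Iic fun i _ _ hi => (hinit i hi).le
    have hle : c 0 ≤ c N := hmono N.zero_le Set.self_mem_Iic N.zero_le
    rw [← MsetDiff_union_MsetDiff hle hstep.le, Set.encard_union_eq disjoint_MsetDiff_MsetDiff,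
      ih hinit, encard_MsetDiff_of_covBy hL hstep, Nat.cast_succ]

/-- in a finite ULD lattice `L`, every maximal chain from `⊥` to `⊤` has
length equal to the number of meet-irreducibles of `L`. -/
theorem stmt17 {L : Type*} [Lattice L] [Fintype L] [BoundedOrder L]
    (hULD : IsULD L) (N : ℕ) (c : ℕ → L)
    (h0 : c 0 = ⊥) (hN : c N = ⊤) (hchain : ∀ i < N, c i ⋖ c (i + 1)) :
    N = Nat.card {m : L // MeetIrred m} := by
  have := hULD.isUpperModularLattice
  have h := stmt17_general hULD.isMeetSemidistrib N c hchain
  rw [h0, hN, MsetDiff_bot_top] at h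
  exact congrArg ENat.toNat h.symm
end
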